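/- Let V be a vertex operator algebra such that L(0) acts semisimply on every weak V-module (class 𝒜), and let W be an ordinary V-module. Then W/C_n(W) is finite-dimensional for every n ≥ 2; moreover W/C₁(W) is finite-dimensional provided the real parts of the weights of W are bounded from below. -/

import Mathlib

noncomputable section

/-- The generalized binomial coefficient `C(m, i)` for `m ∈ ℤ`, `i ∈ ℕ`,
as a complex number: `m(m-1)⋯(m-i+1)/i!`. -/
def cchoose (m : ℤ) (i : ℕ) : ℂ :=
  (∏ j ∈ Finset.range i, ((m : ℂ) - (j : ℂ))) / (Nat.factorial i : ℂ)

/-- A vertex operator algebra `V = ⊕ₙ V₍ₙ₎` over `ℂ`.  The vertex operator map is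
recorded through its modes `op u n v = uₙ v` (so `Y(u,x)v = Σₙ uₙv x^{-n-1}`), with
vacuum `one`, conformal vector `omega` (with `L(k) = ω_{k+1}`), central charge `cc`,
weight grading `wtSpace` with projections `proj`.  The Jacobi identity is recorded in
the equivalent form of the Borcherds identity on modes. -/
structure VOA where
  carrier : Type
  [grp : AddCommGroup carrier]
  [mdl : Module ℂ carrier]
  op : carrier → ℤ → carrier → carrier
  one : carrier
  omega : carrier
  wtSpace : ℤ → Submodule ℂ carrier
  proj : ℤ → carrier → carrier
  cc : ℂ
  op_linear_left : ∀ (n : ℤ) (w : carrier), IsLinearMap ℂ fun u => op u n w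
  op_linear_right : ∀ (u : carrier) (n : ℤ), IsLinearMap ℂ (op u n)
  trunc : ∀ u v : carrier, ∃ N : ℤ, ∀ n : ℤ, N ≤ n → op u n v = 0
  one_op : ∀ (n : ℤ) (v : carrier), op one n v = if n = -1 then v else 0
  create_nonneg : ∀ (v : carrier) (n : ℤ), 0 ≤ n → op v n one = 0
  create : ∀ v : carrier, op v (-1) one = v
  borcherds : ∀ (u v w : carrier) (l m n : ℤ),
    (∑ᶠ i : ℕ, cchoose m i • op (op u (l + (i : ℤ)) v) (m + n - (i : ℤ)) w)
      = ∑ᶠ i : ℕ, ((-1 : ℂ) ^ i * cchoose l i) •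
          (op u (l + m - (i : ℤ)) (op v (n + (i : ℤ)) w)
            - ((-1 : ℂ) ^ l) • op v (l + n - (i : ℤ)) (op u (m + (i : ℤ)) w))
  proj_linear : ∀ n : ℤ, IsLinearMap ℂ (proj n)
  proj_mem : ∀ (n : ℤ) (v : carrier), proj n v ∈ wtSpace n
  proj_eq : ∀ n : ℤ, ∀ v ∈ wtSpace n, proj n v = v
  proj_ne : ∀ m n : ℤ, m ≠ n → ∀ v ∈ wtSpace m, proj n v = 0
  proj_finite : ∀ v : carrier, (Function.support fun n => proj n v).Finite
  proj_sum : ∀ v : carrier, (∑ᶠ n : ℤ, proj n v) = v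
  fd : ∀ n : ℤ, FiniteDimensional ℂ (wtSpace n)
  lower_trunc : ∃ N : ℤ, ∀ n : ℤ, n < N → wtSpace n = ⊥
  one_wt : one ∈ wtSpace 0
  omega_wt : omega ∈ wtSpace 2
  op_wt : ∀ k m n : ℤ, ∀ u ∈ wtSpace k, ∀ v ∈ wtSpace m, op u n v ∈ wtSpace (k + m - n - 1)
  L_zero : ∀ n : ℤ, ∀ v ∈ wtSpace n, op omega 1 v = (n : ℂ) • v
  L_neg_one : ∀ (u : carrier) (n : ℤ) (w : carrier),
    op (op omega 0 u) n w = (-(n : ℂ)) • op u (n - 1) w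
  virasoro : ∀ (m n : ℤ) (v : carrier),
    op omega (m + 1) (op omega (n + 1) v) - op omega (n + 1) (op omega (m + 1) v)
      = ((m : ℂ) - (n : ℂ)) • op omega (m + n + 1) v
        + (if m + n = 0 then (((m : ℂ) ^ 3 - (m : ℂ)) / 12) * cc else 0) • v

attribute [instance] VOA.grp VOA.mdl

namespace VOA

variable (V : VOA)

/-- The Virasoro operator `L(k) = ω_{k+1}`. -/
def L (k : ℤ) (v : V.carrier) : V.carrier := V.op V.omega (k + 1) v

/-- The positive-weight part `V₊ = ⊕_{n ≥ 1} V₍ₙ₎`. -/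
def pos : Submodule ℂ V.carrier := ⨆ (n : ℤ) (_ : 1 ≤ n), V.wtSpace n

/-- Zhu's subspace `C₂(V) = span{u₋₂v : u, v ∈ V}`. -/
def C2 : Submodule ℂ V.carrier :=
  Submodule.span ℂ {x : V.carrier | ∃ u v : V.carrier, x = V.op u (-2) v}

/-- The subspace `C₁(V) = span(v₋₁V₊ (v ∈ V₊) together with L(-1)V)`. -/
def C1 : Submodule ℂ V.carrier :=
  Submodule.span ℂ
    ({x : V.carrier | ∃ u ∈ V.pos, ∃ v ∈ V.pos, x = V.op u (-1) v}
      ∪ {x : V.carrier | ∃ v : V.carrier, x = V.op V.omega 0 v})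

/-- Iterated application of modes: `iterApply [(u¹,n₁),…,(uʳ,n_r)] w = u¹_{n₁} ⋯ uʳ_{n_r} w`. -/
def iterApply : List (V.carrier × ℤ) → V.carrier → V.carrier
  | [], w => w
  | p :: l, w => V.op p.1 p.2 (iterApply l w)

/-- `U ⊆ V` generates `V` as a vertex operator algebra:  `V` is linearly spanned by
the elements `u¹_{n₁} ⋯ uʳ_{n_r} 1` with `uⁱ ∈ U`, `n_i ∈ ℤ`. -/
def generates (U : Set V.carrier) : Prop :=
  Submodule.span ℂ {x : V.carrier | ∃ l : List (V.carrier × ℤ),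
    (∀ p ∈ l, p.1 ∈ U) ∧ x = V.iterApply l V.one} = ⊤

/-- `V` is finitely generated as a vertex operator algebra. -/
def FinitelyGenerated : Prop := ∃ S : Finset V.carrier, V.generates ↑S

end VOA

/-- A weak `V`-module: all axioms of a module (truncation, vacuum, Jacobi identity in
Borcherds form) except those involving gradings. -/
structure WeakModule (V : VOA) where
  carrier : Type
  [grp : AddCommGroup carrier]
  [mdl : Module ℂ carrier]
  op : V.carrier → ℤ → carrier → carrier
  op_linear_left : ∀ (n : ℤ) (w : carrier), IsLinearMap ℂ fun u => op u n w
  op_linear_right : ∀ (u : V.carrier) (n : ℤ), IsLinearMap ℂ (op u n)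
  trunc : ∀ (u : V.carrier) (w : carrier), ∃ N : ℤ, ∀ n : ℤ, N ≤ n → op u n w = 0
  one_op : ∀ (n : ℤ) (w : carrier), op V.one n w = if n = -1 then w else 0
  borcherds : ∀ (u v : V.carrier) (w : carrier) (l m n : ℤ),
    (∑ᶠ i : ℕ, cchoose m i • op (V.op u (l + (i : ℤ)) v) (m + n - (i : ℤ)) w)
      = ∑ᶠ i : ℕ, ((-1 : ℂ) ^ i * cchoose l i) •
          (op u (l + m - (i : ℤ)) (op v (n + (i : ℤ)) w)
            - ((-1 : ℂ) ^ l) • op v (l + n - (i : ℤ)) (op u (m + (i : ℤ)) w))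

attribute [instance] WeakModule.grp WeakModule.mdl

namespace WeakModule

variable {V : VOA} (W : WeakModule V)

/-- `L(0)` acting on a weak module, as a linear map. -/
def L0 : W.carrier →ₗ[ℂ] W.carrier := IsLinearMap.mk' _ (W.op_linear_right V.omega 1)

/-- The `L(0)`-eigenspace of eigenvalue `h`. -/
def eig (h : ℂ) : Submodule ℂ W.carrier :=
  LinearMap.ker (W.L0 - h • (LinearMap.id : W.carrier →ₗ[ℂ] W.carrier))

/-- The coefficient `v*ₙ` of the adjoint vertex operator
`⟨Y*(v,x)α, w⟩ = ⟨α, Y(e^{xL(1)}(-x^{-2})^{L(0)}v, x^{-1})w⟩` acting on the full dual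
space: for `v` homogeneous of weight `h`,
`(v*ₙ α)(w) = (-1)^h Σ_{i≥0} (1/i!) α((L(1)^i v)_{2h-n-i-2} w)`, extended to general
`v` via the weight-space projections. -/
def dmode (v : V.carrier) (n : ℤ) (α : W.carrier → ℂ) (w : W.carrier) : ℂ :=
  ∑ᶠ h : ℤ, ∑ᶠ i : ℕ,
    ((-1 : ℂ) ^ h / (Nat.factorial i : ℂ)) *
      α (W.op ((V.L 1)^[i] (V.proj h v)) (2 * h - n - (i : ℤ) - 2) w)

/-- `D(W) ⊆ W*`: the linear functionals `α` on `W` such that for every `v ∈ V`,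
`Y*(v,x)α ∈ W*((x))`, i.e. `v*ₙ α = 0` for `n` sufficiently large. -/
def DW : Set (W.carrier → ℂ) :=
  {α | IsLinearMap ℂ α ∧
    ∀ v : V.carrier, ∃ N : ℤ, ∀ n : ℤ, N ≤ n → ∀ w : W.carrier, W.dmode v n α w = 0}

/-- A subspace stable under all modes of all vertex operators, i.e. a `V`-submodule. -/
def IsStable (S : Submodule ℂ W.carrier) : Prop :=
  ∀ (v : V.carrier) (n : ℤ), ∀ m ∈ S, W.op v n m ∈ S

/-- An irreducible (nonzero, no proper nonzero stable subspaces) `V`-submodule. -/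
def IsIrreducibleSub (S : Submodule ℂ W.carrier) : Prop :=
  S ≠ ⊥ ∧ W.IsStable S ∧
    ∀ T : Submodule ℂ W.carrier, W.IsStable T → T ≤ S → T = ⊥ ∨ T = S

/-- A stable subspace which is an ordinary module: `L(0)` acts semisimply on it with
finite-dimensional eigenspaces, and for each `h` the eigenvalues `h + m` do not occur
for `m` a sufficiently negative integer. -/
def IsOrdinarySub (S : Submodule ℂ W.carrier) : Prop :=
  S ≤ (⨆ h : ℂ, W.eig h ⊓ S) ∧ (∀ h : ℂ, FiniteDimensional ℂ ↥(W.eig h ⊓ S)) ∧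
    ∀ h : ℂ, ∃ N : ℤ, ∀ m : ℤ, m ≤ N → W.eig (h + (m : ℂ)) ⊓ S = ⊥

/-- The weak module `W` is irreducible. -/
def IsIrreducible : Prop :=
  (⊥ : Submodule ℂ W.carrier) ≠ ⊤ ∧
    ∀ S : Submodule ℂ W.carrier, W.IsStable S → S = ⊥ ∨ S = ⊤

/-- `Cₙ(W) = span{v₋ₙw : v ∈ V, w ∈ W}`. -/
def Cn (n : ℤ) : Submodule ℂ W.carrier :=
  Submodule.span ℂ {x : W.carrier | ∃ (v : V.carrier) (w : W.carrier), x = W.op v (-n) w}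

/-- `B(W) = span(u₋₁W (u ∈ V₊) together with v₀W (v homogeneous, wt v ≥ 2))`. -/
def BW : Submodule ℂ W.carrier :=
  Submodule.span ℂ
    ({x : W.carrier | ∃ v ∈ V.pos, ∃ w : W.carrier, x = W.op v (-1) w}
      ∪ {x : W.carrier | ∃ k : ℤ, 2 ≤ k ∧ ∃ v ∈ V.wtSpace k, ∃ w : W.carrier, x = W.op v 0 w})

/-- Zhu's subspace `O(W) = span{Σ_{i≥0} C(wt v, i) v_{i-2} w}` so that `A(W) = W/O(W)`. -/
def OW : Submodule ℂ W.carrier :=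
  Submodule.span ℂ
    {x : W.carrier | ∃ (k : ℤ) (v : V.carrier), v ∈ V.wtSpace k ∧
      ∃ w : W.carrier, x = ∑ᶠ i : ℕ, cchoose k i • W.op v ((i : ℤ) - 2) w}

/-- A subspace `T ⊇ O(W)` of `W` is closed under the Frenkel–Zhu left and right
`A(V)`-actions `v * w = Σᵢ C(wt v, i) v_{i-1} w` and `w * v = Σᵢ C(wt v - 1, i) v_{i-1} w`;
for `T ⊇ O(W)` this expresses that `T/O(W)` is an `A(V)`-sub-bimodule of `A(W)`. -/
def BimoduleClosed (T : Submodule ℂ W.carrier) : Prop :=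
  ∀ k : ℤ, ∀ v ∈ V.wtSpace k, ∀ w ∈ T,
    (∑ᶠ i : ℕ, cchoose k i • W.op v ((i : ℤ) - 1) w) ∈ T ∧
    (∑ᶠ i : ℕ, cchoose (k - 1) i • W.op v ((i : ℤ) - 1) w) ∈ T

/-- Equivalence (isomorphism) of weak modules. -/
def Equiv (M N : WeakModule V) : Prop :=
  ∃ e : M.carrier ≃ₗ[ℂ] N.carrier,
    ∀ (v : V.carrier) (n : ℤ) (w : M.carrier), e (M.op v n w) = N.op v n (e w)

end WeakModule

/-- `V` is of class 𝒜: `L(0)` acts semisimply on every weak `V`-module. -/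
def VOA.classA (V : VOA) : Prop :=
  ∀ M : WeakModule V, (⨆ h : ℂ, M.eig h) = ⊤

/-- `V` is regular: every weak `V`-module is a direct sum of irreducible ordinary
`V`-modules. -/
def VOA.regular (V : VOA) : Prop :=
  ∀ M : WeakModule V, ∃ (ι : Type) (S : ι → Submodule ℂ M.carrier),
    (∀ i, M.IsIrreducibleSub (S i) ∧ M.IsOrdinarySub (S i)) ∧
    (∀ i, Disjoint (S i) (⨆ (j : ι) (_ : j ≠ i), S j)) ∧ (⨆ i, S i) = ⊤

/-- A generalized `V`-module: a weak module with a semisimple `L(0)`-action, graded by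
the `L(0)`-eigenvalues, with weight-space projections `projW`. -/
structure GenModule (V : VOA) extends WeakModule V where
  wt : ℂ → Submodule ℂ carrier
  projW : ℂ → carrier → carrier
  projW_linear : ∀ h : ℂ, IsLinearMap ℂ (projW h)
  projW_mem : ∀ (h : ℂ) (w : carrier), projW h w ∈ wt h
  projW_eq : ∀ h : ℂ, ∀ w ∈ wt h, projW h w = w
  projW_ne : ∀ g h : ℂ, g ≠ h → ∀ w ∈ wt g, projW h w = 0
  projW_finite : ∀ w : carrier, (Function.support fun h => projW h w).Finite
  projW_sum : ∀ w : carrier, (∑ᶠ h : ℂ, projW h w) = w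
  wt_L0 : ∀ h : ℂ, ∀ w ∈ wt h, op V.omega 1 w = h • w
  wt_op : ∀ k : ℤ, ∀ v ∈ V.wtSpace k, ∀ (h : ℂ) (n : ℤ), ∀ w ∈ wt h,
    op v n w ∈ wt (h + (k : ℂ) - (n : ℂ) - 1)

/-- An ordinary `V`-module: a generalized module whose weight spaces are
finite-dimensional and whose weights are truncated from below in each coset `h + ℤ`. -/
structure OrdModule (V : VOA) extends GenModule V where
  wt_fd : ∀ h : ℂ, FiniteDimensional ℂ ↥(wt h)
  wt_lower : ∀ h : ℂ, ∃ N : ℤ, ∀ m : ℤ, m ≤ N → wt (h + (m : ℂ)) = ⊥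

namespace GenModule

variable {V : VOA} (W : GenModule V)

/-- `W₊ = ⊕_{Re h > 0} W₍ₕ₎`. -/
def posW : Submodule ℂ W.carrier := ⨆ (h : ℂ) (_ : 0 < h.re), W.wt h

/-- `C₁(W) = span(v₋₁W₊ (v ∈ V₊) together with L(-1)W)`. -/
def C1W : Submodule ℂ W.carrier :=
  Submodule.span ℂ
    ({x : W.carrier | ∃ v ∈ V.pos, ∃ w ∈ W.posW, x = W.op v (-1) w}
      ∪ {x : W.carrier | ∃ w : W.carrier, x = W.op V.omega 0 w})

/-- The restricted dual `W' = ⊕ₕ W₍ₕ₎* ⊆ W*`: the linear functionals vanishing on all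
but finitely many weight spaces. -/
def restrictedDual : Set (W.carrier → ℂ) :=
  {α | IsLinearMap ℂ α ∧ {h : ℂ | ∃ w ∈ W.wt h, α w ≠ 0}.Finite}

end GenModule

/-- `D(W)⁰`: the sum of the `L(0)`-eigenspaces of the weak module `D(W) ⊆ W*`, where
`L*(0) = ω*₁` acts on `α ∈ W*` by `(L*(0)α)(w) = α(L(0)w)`. -/
def OrdModule.DW0 {V : VOA} (W : OrdModule V) : Set (W.carrier → ℂ) :=
  {α | ∃ (S : Finset ℂ) (f : ℂ → (W.carrier → ℂ)),
    (∀ h ∈ S, f h ∈ W.toWeakModule.DW ∧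
      ∀ w : W.carrier, f h (W.op V.omega 1 w) = h * f h w) ∧
    α = ∑ h ∈ S, f h}

/-- An ℕ-gradable weak `V`-module: a weak module with an ℕ-grading
`W = ⊕_{n∈ℕ} W(n)` with `v_m W(n) ⊆ W(wt v + n - m - 1)` (graded pieces of negative
index are zero). -/
structure NGradedModule (V : VOA) extends WeakModule V where
  gr : ℤ → Submodule ℂ carrier
  gr_neg : ∀ n : ℤ, n < 0 → gr n = ⊥
  gr_sup : (⨆ n : ℤ, gr n) = ⊤
  gr_indep : ∀ n : ℤ, Disjoint (gr n) (⨆ (m : ℤ) (_ : m ≠ n), gr m)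
  gr_op : ∀ k : ℤ, ∀ v ∈ V.wtSpace k, ∀ m n : ℤ, ∀ w ∈ gr n,
    op v m w ∈ gr (k + n - m - 1)

/-- An intertwining operator of type `(W₃; W₁ W₂)` in the sense of
Frenkel–Huang–Lepowsky, recorded through its complex-indexed modes
`I w₁ h w₂ = (w₁)ₕ w₂` (so `Y(w₁,x)w₂ = Σ_{h∈ℂ} (w₁)ₕ w₂ x^{-h-1}`):
linearity, truncation, the `L(-1)`-derivative property, and the Jacobi identity in
component (Borcherds) form. -/
def IsIntertwiner {V : VOA} (W1 W2 W3 : OrdModule V)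
    (I : W1.carrier → ℂ → W2.carrier → W3.carrier) : Prop :=
  (∀ (h : ℂ) (w2 : W2.carrier), IsLinearMap ℂ fun w1 => I w1 h w2) ∧
  (∀ (w1 : W1.carrier) (h : ℂ), IsLinearMap ℂ (I w1 h)) ∧
  (∀ (w1 : W1.carrier) (w2 : W2.carrier) (h : ℂ),
    ∃ N : ℤ, ∀ n : ℤ, N ≤ n → I w1 (h + (n : ℂ)) w2 = 0) ∧
  (∀ (w1 : W1.carrier) (h : ℂ) (w2 : W2.carrier),
    I (W1.op V.omega 0 w1) h w2 = (-h) • I w1 (h - 1) w2) ∧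
  (∀ (u : V.carrier) (w1 : W1.carrier) (w2 : W2.carrier) (l m : ℤ) (h : ℂ),
    (∑ᶠ i : ℕ, cchoose m i • I (W1.op u (l + (i : ℤ)) w1) ((m : ℂ) + h - (i : ℂ)) w2)
      = ∑ᶠ i : ℕ, ((-1 : ℂ) ^ i * cchoose l i) •
          (W3.op u (l + m - (i : ℤ)) (I w1 (h + (i : ℂ)) w2)
            - ((-1 : ℂ) ^ l) • I w1 ((l : ℂ) + h - (i : ℂ)) (W2.op u (m + (i : ℤ)) w2)))

/-- The fusion rule `dim I(W₃; W₁W₂)` is finite: the space of intertwining operators of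
the indicated type is finite-dimensional. -/
def FusionFinite {V : VOA} (W1 W2 W3 : OrdModule V) : Prop :=
  FiniteDimensional ℂ
    ↥(Submodule.span ℂ {I : W1.carrier → ℂ → W2.carrier → W3.carrier |
        IsIntertwiner W1 W2 W3 I})

end

noncomputable section

theorem cchoose_zero_right (m : ℤ) : cchoose m 0 = 1 := by simp [cchoose]

theorem cchoose_succ_mul (m : ℤ) (i : ℕ) :
    ((i : ℂ) + 1) * cchoose m (i + 1) = ((m : ℂ) - i) * cchoose m i := by
  unfold cchoose
  rw [Finset.prod_range_succ, Nat.factorial_succ]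
  have h1 : ((i.factorial : ℕ) : ℂ) ≠ 0 := by exact_mod_cast Nat.factorial_ne_zero i
  have h2 : (i : ℂ) + 1 ≠ 0 := by exact_mod_cast Nat.succ_ne_zero i
  push_cast
  field_simp

theorem cchoose_pascal (m : ℤ) (i : ℕ) :
    cchoose (m + 1) (i + 1) = cchoose m (i + 1) + cchoose m i := by
  unfold cchoose
  rw [Finset.prod_range_succ', Finset.prod_range_succ (fun j : ℕ => ((m : ℂ) - (j : ℂ))),
    Nat.factorial_succ]
  have h1 : ((i.factorial : ℕ) : ℂ) ≠ 0 := by exact_mod_cast Nat.factorial_ne_zero i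
  have h2 : (i : ℂ) + 1 ≠ 0 := by exact_mod_cast Nat.succ_ne_zero i
  have h3 : ∀ k : ℕ, (((m + 1 : ℤ) : ℂ) - ((k + 1 : ℕ) : ℂ)) = (m : ℂ) - k := by
    intro k; push_cast; ring
  simp only [h3]
  push_cast
  field_simp
  ring

theorem cchoose_zero_left (i : ℕ) (hi : i ≠ 0) : cchoose 0 i = 0 := by
  obtain ⟨j, rfl⟩ := Nat.exists_eq_succ_of_ne_zero hi
  simp [cchoose, Finset.prod_range_succ']

theorem cchoose_neg_ne_zero (l : ℤ) (hl : l < 0) (i : ℕ) : cchoose l i ≠ 0 := by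
  unfold cchoose
  refine div_ne_zero (Finset.prod_ne_zero_iff.2 fun j _ => ?_)
    (by exact_mod_cast Nat.factorial_ne_zero i)
  have : l - (j : ℤ) ≠ 0 := by omega
  exact_mod_cast this

/-- `∑_{t+s=S} (-1)^t C(m,t) C(a-t,s) = C(a-m,S)`. -/
theorem cchoose_conv (S : ℕ) : ∀ (a m : ℤ),
    ∑ p ∈ Finset.HasAntidiagonal.antidiagonal S, (-1 : ℂ) ^ p.1 * cchoose m p.1 * cchoose (a - p.1) p.2
      = cchoose (a - m) S := by
  induction S with
  | zero => intro a m; simp [cchoose_zero_right]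
  | succ S ih =>
    intro a
    have step : ∀ m : ℤ,
        ∑ p ∈ Finset.HasAntidiagonal.antidiagonal (S + 1),
          (-1 : ℂ) ^ p.1 * cchoose (m + 1) p.1 * cchoose (a - p.1) p.2
        = ∑ p ∈ Finset.HasAntidiagonal.antidiagonal (S + 1),
            (-1 : ℂ) ^ p.1 * cchoose m p.1 * cchoose (a - p.1) p.2
          - cchoose (a - 1 - m) S := by
      intro m
      rw [Finset.Nat.sum_antidiagonal_succ, Finset.Nat.sum_antidiagonal_succ, ← ih (a - 1) m,
        add_sub_assoc, ← Finset.sum_sub_distrib]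
      simp only [cchoose_pascal, cchoose_zero_right]
      congr 1
      refine Finset.sum_congr rfl fun p _ => ?_
      have : a - ((p.1 + 1 : ℕ) : ℤ) = a - 1 - p.1 := by push_cast; ring
      rw [this]
      ring
    have pas : ∀ m : ℤ, cchoose (a - (m + 1)) (S + 1)
        = cchoose (a - m) (S + 1) - cchoose (a - 1 - m) S := by
      intro m
      have := cchoose_pascal (a - 1 - m) S
      rw [show a - 1 - m + 1 = a - m by ring] at this
      rw [this, show a - (m + 1) = a - 1 - m by ring]
      ring
    intro m
    induction m using Int.induction_on with
    | zero =>
      rw [Finset.Nat.sum_antidiagonal_succ]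
      simp [cchoose_zero_left, cchoose_zero_right]
    | succ i hi => rw [step, pas, hi]
    | pred i hi =>
      have h1 := step (-(i : ℤ) - 1)
      have h2 := pas (-(i : ℤ) - 1)
      rw [sub_add_cancel] at h1 h2
      rw [hi, h2] at h1
      exact (sub_left_inj.1 h1).symm

theorem sum_antidiag_box {M : Type*} [AddCommMonoid M] (f : ℕ → ℕ → M) (A B N : ℕ)
    (hA : ∀ a b, A ≤ a → f a b = 0) (hB : ∀ a b, B ≤ b → f a b = 0) (hN : A + B ≤ N) :
    ∑ n ∈ Finset.range N, ∑ p ∈ Finset.HasAntidiagonal.antidiagonal n, f p.1 p.2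
      = ∑ a ∈ Finset.range A, ∑ b ∈ Finset.range B, f a b := by
  rw [← Finset.sum_product']
  rw [← Finset.sum_fiberwise_of_maps_to (s := Finset.range A ×ˢ Finset.range B)
    (t := Finset.range N) (g := fun p => p.1 + p.2)]
  · refine Finset.sum_congr rfl fun n _ => ?_
    symm
    apply Finset.sum_subset
    · intro p hp; simp only [Finset.mem_filter] at hp; simpa using hp.2
    · intro p hp hp'
      simp only [Finset.mem_filter, Finset.mem_product, Finset.mem_range,
        Finset.HasAntidiagonal.mem_antidiagonal] at hp hp'
      by_cases h : A ≤ p.1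
      · exact hA _ _ h
      · apply hB
        by_contra h2
        exact hp' ⟨⟨by omega, by omega⟩, hp⟩
  · intro p hp
    simp only [Finset.mem_product, Finset.mem_range] at hp ⊢
    omega

theorem finsum_eq_range {M : Type*} [AddCommMonoid M] (f : ℕ → M) (K : ℕ)
    (h : ∀ i, K ≤ i → f i = 0) : ∑ᶠ i, f i = ∑ i ∈ Finset.range K, f i := by
  apply finsum_eq_sum_of_support_subset
  intro i hi
  simp only [Finset.coe_range, Set.mem_Iio]
  by_contra h2
  exact hi (h i (by omega))

def VOA.opB (V : VOA) (n : ℤ) : V.carrier →ₗ[ℂ] V.carrier →ₗ[ℂ] V.carrier :=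
  LinearMap.mk₂ ℂ (fun u w => V.op u n w)
    (fun a b w => (V.op_linear_left n w).map_add a b)
    (fun c a w => (V.op_linear_left n w).map_smul c a)
    (fun a => (V.op_linear_right a n).map_add)
    (fun c a => (V.op_linear_right a n).map_smul c)

theorem VOA.opB_apply (V : VOA) (n : ℤ) (u v : V.carrier) : V.opB n u v = V.op u n v := rfl

def WeakModule.opB {V : VOA} (W : WeakModule V) (n : ℤ) :
    V.carrier →ₗ[ℂ] W.carrier →ₗ[ℂ] W.carrier :=
  LinearMap.mk₂ ℂ (fun u w => W.op u n w)
    (fun a b w => (W.op_linear_left n w).map_add a b)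
    (fun c a w => (W.op_linear_left n w).map_smul c a)
    (fun a => (W.op_linear_right a n).map_add)
    (fun c a => (W.op_linear_right a n).map_smul c)

theorem WeakModule.opB_apply {V : VOA} (W : WeakModule V) (n : ℤ) (u : V.carrier)
    (w : W.carrier) : W.opB n u w = W.op u n w := rfl

/-- `L(1)` on `V`. -/
def VOA.L1 (V : VOA) : Module.End ℂ V.carrier := V.opB 2 V.omega

theorem VOA.L1_apply (V : VOA) (v : V.carrier) : V.L1 v = V.op V.omega 2 v := rfl

/-- `V` as a module over itself. -/
def VOA.self (V : VOA) : WeakModule V where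
  carrier := V.carrier
  op := V.op
  op_linear_left := V.op_linear_left
  op_linear_right := V.op_linear_right
  trunc := V.trunc
  one_op := V.one_op
  borcherds := V.borcherds

theorem WeakModule.bor_ev {V : VOA} (W : WeakModule V) (u v : V.carrier) (w : W.carrier)
    (l m n : ℤ) : ∃ K0 : ℕ, ∀ K, K0 ≤ K →
    (∑ i ∈ Finset.range K, cchoose m i • W.op (V.op u (l + (i : ℤ)) v) (m + n - (i : ℤ)) w)
      = ∑ i ∈ Finset.range K, ((-1 : ℂ) ^ i * cchoose l i) •
          (W.op u (l + m - (i : ℤ)) (W.op v (n + (i : ℤ)) w)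
            - ((-1 : ℂ) ^ l) • W.op v (l + n - (i : ℤ)) (W.op u (m + (i : ℤ)) w)) := by
  obtain ⟨N1, h1⟩ := V.trunc u v
  obtain ⟨N2, h2⟩ := W.trunc v w
  obtain ⟨N3, h3⟩ := W.trunc u w
  refine ⟨(N1 - l).toNat + (N2 - n).toNat + (N3 - m).toNat, fun K hK => ?_⟩
  rw [← finsum_eq_range, ← finsum_eq_range]
  · exact W.borcherds u v w l m n
  · intro i hi
    rw [h2 _ (by omega), h3 _ (by omega), ← W.opB_apply, ← W.opB_apply]
    simp
  · intro i hi
    rw [h1 _ (by omega), ← W.opB_apply]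
    simp

/-- commutator formula -/
theorem WeakModule.comm {V : VOA} (W : WeakModule V) (u v : V.carrier) (w : W.carrier)
    (m n : ℤ) : (∑ᶠ i : ℕ, cchoose m i • W.op (V.op u (i : ℤ) v) (m + n - (i : ℤ)) w)
      = W.op u m (W.op v n w) - W.op v n (W.op u m w) := by
  have h := W.borcherds u v w 0 m n
  simp only [zero_add] at h
  rw [h, finsum_eq_range _ 1]
  · simp [cchoose_zero_right]
  · intro i hi
    rw [cchoose_zero_left i (by omega)]; simp

/-- `(v_l 1)_{-1-i} = c v_{l-i}` with `c ≠ 0`, for `l < 0`. -/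
theorem WeakModule.op_one_neg {V : VOA} (W : WeakModule V) (v : V.carrier) (l : ℤ) (hl : l < 0)
    (i : ℕ) (w : W.carrier) :
    W.op (V.op v l V.one) (-1 - i) w = ((-1 : ℂ) ^ i * cchoose l i) • W.op v (l - i) w := by
  have h := W.borcherds v V.one w l 0 (-1 - i)
  rw [finsum_eq_range _ 1, finsum_eq_single _ i] at h
  · simp only [Finset.range_one, Finset.sum_singleton, cchoose_zero_right] at h
    simp only [one_smul, Nat.cast_zero, add_zero, zero_add, sub_zero] at h
    rw [h]
    congr 1
    rw [W.one_op, W.one_op, if_pos (by omega), if_neg (by omega)]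
    simp
  · intro j hj
    rw [W.one_op, W.one_op, if_neg (by omega), if_neg (by omega), ← W.opB_apply]
    simp
  · intro j hj
    rw [cchoose_zero_left j (by omega)]; simp

theorem VOA.omega_zero (V : VOA) (v : V.carrier) : V.op V.omega 0 v = V.op v (-2) V.one := by
  have h := V.L_neg_one v (-1) V.one
  rw [V.create] at h
  rw [h]; norm_num

/-- commutation of `L(1)` with modes, in `V`. -/
theorem VOA.L1_op (V : VOA) (h : ℤ) (u : V.carrier) (hu : u ∈ V.wtSpace h) (n : ℤ)
    (v : V.carrier) :
    V.L1 (V.op u n v) = V.op (V.L1 u) n v + ((2 * h - n - 2 : ℤ) : ℂ) • V.op u (n + 1) v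
      + V.op u n (V.L1 v) := by
  have hc := V.self.comm V.omega u v 2 n
  change (∑ᶠ i : ℕ, cchoose 2 i • V.op (V.op V.omega (i : ℤ) u) (2 + n - (i : ℤ)) v) =
    V.op V.omega 2 (V.op u n v) - V.op u n (V.op V.omega 2 v) at hc
  rw [V.L1_apply, V.L1_apply, V.L1_apply, ← sub_eq_iff_eq_add, ← hc, finsum_eq_range _ 3]
  · have c1 : cchoose 2 1 = 2 := by simp [cchoose]
    have c2 : cchoose 2 2 = 1 := by
      simp [cchoose, Finset.prod_range_succ]; norm_num
    simp only [Finset.sum_range_succ, Finset.sum_range_zero, c1, c2, cchoose_zero_right]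
    simp only [Nat.cast_zero, Nat.cast_one, Nat.cast_ofNat]
    rw [V.L_neg_one, V.L_zero h u hu, ← V.opB_apply _ ((h : ℂ) • u)]
    rw [show 2 + n - 0 - 1 = n + 1 by ring, show 2 + n - 1 = n + 1 by ring,
      show 2 + n - 2 = n by ring, show 2 + n - 0 = n + 2 by ring]
    simp only [map_smul, LinearMap.smul_apply, V.opB_apply]
    push_cast
    module
  · intro i hi
    have : cchoose 2 i = 0 := by
      obtain ⟨j, rfl⟩ := Nat.exists_eq_add_of_le' hi
      simp [cchoose, Finset.prod_range_succ']
      norm_num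
    rw [this, zero_smul]

end
noncomputable section

/-- sum over triples of total degree `r` -/
def tri {M : Type*} [AddCommMonoid M] (r : ℕ) (f : ℕ → ℕ → ℕ → M) : M :=
  ∑ p ∈ Finset.HasAntidiagonal.antidiagonal r,
    ∑ q ∈ Finset.HasAntidiagonal.antidiagonal p.2, f p.1 q.1 q.2

theorem tri_congr {M : Type*} [AddCommMonoid M] (r : ℕ) (f g : ℕ → ℕ → ℕ → M)
    (h : ∀ a b s, a + b + s = r → f a b s = g a b s) : tri r f = tri r g := by
  refine Finset.sum_congr rfl fun p hp => Finset.sum_congr rfl fun q hq => h _ _ _ ?_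
  rw [Finset.HasAntidiagonal.mem_antidiagonal] at hp hq
  omega

theorem tri_add {M : Type*} [AddCommMonoid M] (r : ℕ) (f g : ℕ → ℕ → ℕ → M) :
    tri r (fun a b s => f a b s + g a b s) = tri r f + tri r g := by
  simp [tri, Finset.sum_add_distrib]

theorem tri_map {M N : Type*} [AddCommGroup M] [AddCommGroup N] [Module ℂ M] [Module ℂ N]
    (φ : M →ₗ[ℂ] N) (r : ℕ) (f : ℕ → ℕ → ℕ → M) :
    φ (tri r f) = tri r (fun a b s => φ (f a b s)) := by
  simp [tri, map_sum]

theorem tri_smul {M : Type*} [AddCommGroup M] [Module ℂ M] (c : ℂ)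
    (r : ℕ) (f : ℕ → ℕ → ℕ → M) :
    c • (tri r f) = tri r (fun a b s => c • (f a b s)) := by
  simp [tri, Finset.smul_sum]

theorem tri_shift1 {M : Type*} [AddCommMonoid M] (r : ℕ) (f : ℕ → ℕ → ℕ → M)
    (h : ∀ b s, f 0 b s = 0) : tri (r + 1) f = tri r (fun a b s => f (a + 1) b s) := by
  unfold tri
  rw [Finset.Nat.sum_antidiagonal_succ]
  simp [h]

theorem tri_shift2 {M : Type*} [AddCommMonoid M] (r : ℕ) (f : ℕ → ℕ → ℕ → M)
    (h : ∀ a s, f a 0 s = 0) : tri (r + 1) f = tri r (fun a b s => f a (b + 1) s) := by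
  unfold tri
  rw [Finset.Nat.sum_antidiagonal_succ']
  simp [h, Finset.Nat.sum_antidiagonal_succ]

theorem tri_shift3 {M : Type*} [AddCommMonoid M] (r : ℕ) (f : ℕ → ℕ → ℕ → M)
    (h : ∀ a b, f a b 0 = 0) : tri (r + 1) f = tri r (fun a b s => f a b (s + 1)) := by
  unfold tri
  rw [Finset.Nat.sum_antidiagonal_succ']
  simp [h, Finset.Nat.sum_antidiagonal_succ']

theorem tri_box {M : Type*} [AddCommMonoid M] (f : ℕ → ℕ → ℕ → M) (A B C R : ℕ)
    (hA : ∀ a b s, A ≤ a → f a b s = 0) (hB : ∀ a b s, B ≤ b → f a b s = 0)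
    (hC : ∀ a b s, C ≤ s → f a b s = 0) (hR : A + (B + C) ≤ R) :
    ∑ r ∈ Finset.range R, tri r f
      = ∑ a ∈ Finset.range A, ∑ b ∈ Finset.range B, ∑ s ∈ Finset.range C, f a b s := by
  unfold tri
  rw [sum_antidiag_box (fun a n => ∑ q ∈ Finset.HasAntidiagonal.antidiagonal n, f a q.1 q.2)
    A (B + C) R _ _ hR]
  · refine Finset.sum_congr rfl fun a _ => ?_
    exact sum_antidiag_box (f a) B C (B + C) (hB a) (hC a) le_rfl
  · intro a n ha
    exact Finset.sum_eq_zero fun q _ => hA _ _ _ ha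
  · intro a n hn
    refine Finset.sum_eq_zero fun q hq => ?_
    rw [Finset.HasAntidiagonal.mem_antidiagonal] at hq
    by_cases h : B ≤ q.1
    · exact hB _ _ _ h
    · exact hC _ _ _ (by omega)

/-- the combinatorial core of the conjugation formula for `e^{xL(1)}` -/
theorem tri_step {M : Type*} [AddCommGroup M] [Module ℂ M] (L : M →ₗ[ℂ] M)
    (w : ℕ → ℕ → ℕ → M) (A : ℤ)
    (hw : ∀ a b s, L (w a b s) = ((a : ℂ) + 1) • w (a + 1) b s + ((b : ℂ) + 1) • w a (b + 1) s
      + ((A : ℂ) - 2 * a - s) • w a b (s + 1)) (r : ℕ) :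
    L (tri r fun a b s => cchoose (A - a) s • w a b s)
      = ((r : ℂ) + 1) • tri (r + 1) fun a b s => cchoose (A - a) s • w a b s := by
  let pre : ℕ → ℕ → ℂ := fun a s => Nat.casesOn s 0 (fun s' => cchoose (A - a) s')
  have e1 := tri_shift1 r (fun a b s => ((a : ℂ) * cchoose (A - a + 1) s) • w a b s)
    (by intros; simp)
  have e2 := tri_shift2 r (fun a b s => ((b : ℂ) * cchoose (A - a) s) • w a b s)
    (by intros; simp)
  have e3 := tri_shift3 r (fun a b s => ((s : ℂ) * cchoose (A - a) s - a * pre a s) • w a b s)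
    (by intros; simp [pre])
  rw [tri_map, tri_smul]
  have h1 : (tri r fun a b s => L (cchoose (A - a) s • w a b s)) =
      (tri r fun a b s => (((a + 1 : ℕ) : ℂ) * cchoose (A - ((a + 1 : ℕ) : ℤ) + 1) s) •
        w (a + 1) b s)
      + (tri r fun a b s => (((b + 1 : ℕ) : ℂ) * cchoose (A - a) s) • w a (b + 1) s)
      + (tri r fun a b s => (((s + 1 : ℕ) : ℂ) * cchoose (A - a) (s + 1) - a * pre a (s + 1)) •
        w a b (s + 1)) := by
    rw [← tri_add, ← tri_add]
    apply tri_congr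
    intro a b s _
    have c := cchoose_succ_mul (A - a) s
    rw [map_smul, hw, show A - ((a + 1 : ℕ) : ℤ) + 1 = A - a by push_cast; ring]
    simp only [pre]
    push_cast at c ⊢
    rw [c]
    module
  rw [h1, ← e1, ← e2, ← e3, ← tri_add, ← tri_add]
  apply tri_congr
  intro a b s hs
  have hr : (r : ℂ) + 1 = a + b + s := by exact_mod_cast hs.symm
  rw [hr]
  cases s with
  | zero =>
    have hp0 : pre a 0 = 0 := rfl
    rw [hp0, cchoose_zero_right, cchoose_zero_right]
    push_cast
    module
  | succ s =>
    simp only [pre, cchoose_pascal]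
    module

/-- lower bound for the weights of `V` -/
def VOA.low (V : VOA) : ℤ := Classical.choose V.lower_trunc

theorem VOA.low_spec (V : VOA) (n : ℤ) (h : n < V.low) : V.wtSpace n = ⊥ :=
  Classical.choose_spec V.lower_trunc n h

def VOA.KK (V : VOA) (h : ℤ) : ℕ := (h - V.low + 1).toNat

theorem VOA.L1pow_mem (V : VOA) (h : ℤ) (u : V.carrier) (hu : u ∈ V.wtSpace h) (i : ℕ) :
    (V.L1 ^ i) u ∈ V.wtSpace (h - i) := by
  induction i with
  | zero => simpa using hu
  | succ i ih =>
    rw [pow_succ', Module.End.mul_apply, V.L1_apply]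
    have := V.op_wt 2 (h - i) 2 _ V.omega_wt _ ih
    convert this using 2
    push_cast; ring

theorem VOA.L1pow_zero (V : VOA) (h : ℤ) (u : V.carrier) (hu : u ∈ V.wtSpace h) (i : ℕ)
    (hi : V.KK h ≤ i) : (V.L1 ^ i) u = 0 := by
  have := V.L1pow_mem h u hu i
  rw [V.low_spec _ (by unfold VOA.KK at hi; omega)] at this
  simpa using this

theorem VOA.L1pow_op (V : VOA) (h : ℤ) (u : V.carrier) (hu : u ∈ V.wtSpace h) (n : ℤ)
    (v : V.carrier) (r : ℕ) :
    (V.L1 ^ r) (V.op u n v) = (r.factorial : ℂ) • tri r fun a b s =>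
      cchoose (2 * h - n - 2 - a) s •
        ((1 / ((a.factorial : ℂ) * b.factorial)) •
          V.op ((V.L1 ^ a) u) (n + s) ((V.L1 ^ b) v)) := by
  induction r with
  | zero => simp [tri, cchoose_zero_right]
  | succ r ih =>
    rw [pow_succ', Module.End.mul_apply, ih, map_smul,
      tri_step V.L1 (fun a b s => ((1 / ((a.factorial : ℂ) * b.factorial)) •
          V.op ((V.L1 ^ a) u) (n + s) ((V.L1 ^ b) v))) (2 * h - n - 2), smul_smul,
      Nat.factorial_succ]
    · push_cast
      rw [mul_comm]
    · intro a b s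
      rw [map_smul, V.L1_op (h - a) _ (V.L1pow_mem h u hu a)]
      rw [← Module.End.mul_apply, ← Module.End.mul_apply, ← pow_succ', ← pow_succ',
        Nat.factorial_succ, Nat.factorial_succ,
        show n + (s : ℤ) + 1 = n + ((s + 1 : ℕ) : ℤ) by push_cast; ring]
      have f1 : ((a.factorial : ℕ) : ℂ) ≠ 0 := by exact_mod_cast Nat.factorial_ne_zero a
      have f2 : ((b.factorial : ℕ) : ℂ) ≠ 0 := by exact_mod_cast Nat.factorial_ne_zero b
      have f3 : (a : ℂ) + 1 ≠ 0 := by exact_mod_cast Nat.succ_ne_zero a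
      have f4 : (b : ℂ) + 1 ≠ 0 := by exact_mod_cast Nat.succ_ne_zero b
      simp only [smul_add, smul_smul]
      rw [show ∀ a b c : V.carrier, a + b + c = a + c + b by intros; abel]
      congr 1
      · congr 1
        · congr 1
          push_cast; field_simp
        · congr 1
          push_cast; field_simp
      · congr 1
        push_cast; ring

variable {V : VOA}

def WeakModule.dagH (W : WeakModule V) (h n : ℤ) :
    V.carrier →ₗ[ℂ] W.carrier →ₗ[ℂ] W.carrier :=
  ∑ i ∈ Finset.range (V.KK h), ((-1 : ℂ) ^ h / (i.factorial : ℂ)) •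
    ((W.opB (2 * h - n - i - 2)) ∘ₗ (V.L1 ^ i))

theorem WeakModule.dagH_apply (W : WeakModule V) (h n : ℤ) (u : V.carrier)
    (hu : u ∈ V.wtSpace h) (w : W.carrier) (R : ℕ) (hR : V.KK h ≤ R) :
    W.dagH h n u w = ∑ i ∈ Finset.range R, ((-1 : ℂ) ^ h / (i.factorial : ℂ)) •
      W.op ((V.L1 ^ i) u) (2 * h - n - i - 2) w := by
  unfold WeakModule.dagH
  simp only [LinearMap.sum_apply, LinearMap.smul_apply, LinearMap.comp_apply]
  simp only [← W.opB_apply]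
  apply Finset.sum_subset
  · intro i; simp only [Finset.mem_range]; omega
  · intro i _ hi
    rw [V.L1pow_zero h u hu i (by simpa using hi)]
    simp

def VOA.projL (V : VOA) (h : ℤ) : V.carrier →ₗ[ℂ] V.carrier :=
  IsLinearMap.mk' _ (V.proj_linear h)

theorem VOA.projL_finite (V : VOA) (v : V.carrier) :
    (Function.support fun h => V.projL h v).Finite := V.proj_finite v

def WeakModule.dag (W : WeakModule V) (n : ℤ) :
    V.carrier →ₗ[ℂ] W.carrier →ₗ[ℂ] W.carrier where
  toFun v := ∑ᶠ h : ℤ, W.dagH h n (V.projL h v)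
  map_add' a b := by
    simp only [map_add]
    apply finsum_add_distrib
    · refine (V.projL_finite a).subset fun h hh => ?_
      intro h0
      apply hh
      simp only at h0 ⊢
      rw [h0, map_zero]
    · refine (V.projL_finite b).subset fun h hh => ?_
      intro h0
      apply hh
      simp only at h0 ⊢
      rw [h0, map_zero]
  map_smul' c a := by
    simp only [map_smul]
    rw [smul_finsum]
    rfl

theorem WeakModule.dag_hom (W : WeakModule V) (n h : ℤ) (u : V.carrier)
    (hu : u ∈ V.wtSpace h) : W.dag n u = W.dagH h n u := by
  change ∑ᶠ h : ℤ, W.dagH h n (V.projL h u) = _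
  rw [finsum_eq_single _ h]
  · congr 1
    exact V.proj_eq h u hu
  · intro g hg
    rw [show V.projL g u = 0 from V.proj_ne h g hg.symm u hu, map_zero]

theorem WeakModule.dag_apply (W : WeakModule V) (h n : ℤ) (u : V.carrier)
    (hu : u ∈ V.wtSpace h) (w : W.carrier) (R : ℕ) (hR : V.KK h ≤ R) :
    W.dag n u w = ∑ i ∈ Finset.range R, ((-1 : ℂ) ^ h / (i.factorial : ℂ)) •
      W.op ((V.L1 ^ i) u) (2 * h - n - i - 2) w := by
  rw [W.dag_hom n h u hu, W.dagH_apply h n u hu w R hR]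

end
noncomputable section

variable {V : VOA}

theorem neg_one_sign (h k l t : ℤ) : (-1 : ℂ) ^ (h + k - (l + t) - 1)
    = -((-1 : ℂ) ^ h * (-1 : ℂ) ^ k * (-1 : ℂ) ^ l * (-1 : ℂ) ^ t) := by
  have h1 : (-1 : ℂ) ≠ 0 := by norm_num
  have e : h + k - (l + t) - 1 = h + k + l + t + 1 - 2 * (l + t + 1) := by ring
  rw [e, zpow_sub₀ h1, zpow_mul]
  norm_num [zpow_add₀ h1]

theorem WeakModule.dag_bor_hom (W : WeakModule V) (h k : ℤ) (u v : V.carrier)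
    (hu : u ∈ V.wtSpace h) (hv : v ∈ V.wtSpace k) (w : W.carrier) (l m n : ℤ) :
    ∃ K0 : ℕ, ∀ K, K0 ≤ K →
    (∑ t ∈ Finset.range K, cchoose m t • W.dag (m + n - (t : ℤ)) (V.op u (l + (t : ℤ)) v) w)
      = ∑ i ∈ Finset.range K, ((-1 : ℂ) ^ i * cchoose l i) •
          (W.dag (n + (i : ℤ)) v (W.dag (l + m - (i : ℤ)) u w)
            - ((-1 : ℂ) ^ l) • W.dag (m + (i : ℤ)) u (W.dag (l + n - (i : ℤ)) v w)) := by
  set J := V.KK h + V.KK k with hJ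
  set S := V.KK (h + k - l - 1) with hS
  let E : ℤ := 2 * h + 2 * k - m - n - 2 * l - 4
  let X : ℕ → ℕ → ℕ → W.carrier := fun a b N =>
    (1 / ((a.factorial : ℂ) * b.factorial)) •
      W.op (V.op ((V.L1 ^ a) u) (l + N) ((V.L1 ^ b) v)) (E - a - b - N) w
  let σ : ℂ := -((-1 : ℂ) ^ h * (-1 : ℂ) ^ k * (-1 : ℂ) ^ l)
  have XA : ∀ a b N, J ≤ a → X a b N = 0 := by
    intro a b N ha
    simp only [X]
    rw [V.L1pow_zero h u hu a (by omega), ← W.opB_apply, ← V.opB_apply]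
    simp
  have XB : ∀ a b N, J ≤ b → X a b N = 0 := by
    intro a b N ha
    simp only [X]
    rw [V.L1pow_zero k v hv b (by omega), ← W.opB_apply, ← V.opB_apply]
    simp
  have XS : ∀ a b N, S ≤ N → X a b N = 0 := by
    intro a b N hN
    have h0 := V.op_wt _ _ (l + N) _ (V.L1pow_mem h u hu a) _ (V.L1pow_mem k v hv b)
    rw [V.low_spec _ (by simp only [hS, VOA.KK] at hN; omega), Submodule.mem_bot] at h0
    simp only [X]
    rw [h0, ← W.opB_apply]
    simp
  -- left side
  have left : ∀ K, S ≤ K →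
      (∑ t ∈ Finset.range K, cchoose m t •
        W.dag (m + n - (t : ℤ)) (V.op u (l + (t : ℤ)) v) w)
      = σ • ∑ a ∈ Finset.range J, ∑ b ∈ Finset.range J, ∑ N ∈ Finset.range K,
          cchoose (2 * h - a - m - l - 2) N • X a b N := by
    intro K hK
    have h1 : ∀ t : ℕ, W.dag (m + n - (t : ℤ)) (V.op u (l + (t : ℤ)) v) w
        = (σ * (-1) ^ t) • ∑ a ∈ Finset.range J, ∑ b ∈ Finset.range J, ∑ s ∈ Finset.range S,
          cchoose (2 * h - l - t - 2 - a) s • X a b (t + s) := by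
      intro t
      have hwt := V.op_wt h k (l + t) u hu v hv
      rw [W.dag_apply _ _ _ hwt w (J + (J + S)) (by simp only [hS, VOA.KK]; omega)]
      rw [← tri_box (fun a b s => cchoose (2 * h - l - t - 2 - a) s • X a b (t + s)) J J S
        (J + (J + S)) (fun a b s ha => by rw [XA _ _ _ ha, smul_zero])
        (fun a b s ha => by rw [XB _ _ _ ha, smul_zero])
        (fun a b s ha => by rw [XS _ _ _ (by omega), smul_zero]) le_rfl, Finset.smul_sum]
      refine Finset.sum_congr rfl fun r _ => ?_
      rw [V.L1pow_op h u hu, ← W.opB_apply, map_smul, LinearMap.smul_apply, smul_smul,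
        neg_one_sign]
      have f1 : ((r.factorial : ℕ) : ℂ) ≠ 0 := by exact_mod_cast Nat.factorial_ne_zero r
      rw [div_mul_cancel₀ _ f1]
      congr 1
      · simp only [σ, zpow_natCast]; ring
      · rw [tri_map, show ∀ f : ℕ → ℕ → ℕ → (W.carrier →ₗ[ℂ] W.carrier),
          tri r f w = tri r (fun a b s => f a b s w) from fun f =>
            tri_map (LinearMap.applyₗ w) r f]
        apply tri_congr
        intro a b s hr
        simp only [X, map_smul, LinearMap.smul_apply, W.opB_apply]
        congr 1
        · congr 1; ring
        · congr 2
          · congr 1; push_cast; ring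
          · simp only [E]; push_cast [← hr]; ring
    simp only [h1]
    have h2 : ∀ a b : ℕ, ∑ N ∈ Finset.range K, cchoose (2 * h - a - m - l - 2) N • X a b N
        = ∑ t ∈ Finset.range K, ∑ s ∈ Finset.range S,
          ((-1 : ℂ) ^ t * cchoose m t * cchoose (2 * h - l - 2 - a - t) s) • X a b (t + s) := by
      intro a b
      rw [← sum_antidiag_box (fun t s => ((-1 : ℂ) ^ t * cchoose m t *
          cchoose (2 * h - l - 2 - a - t) s) • X a b (t + s)) K S (K + S)
        (fun t s ht => by rw [XS _ _ _ (by omega), smul_zero])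
        (fun t s ht => by rw [XS _ _ _ (by omega), smul_zero]) le_rfl]
      rw [Finset.sum_subset (Finset.range_mono (by omega : K ≤ K + S))]
      · refine Finset.sum_congr rfl fun N _ => ?_
        rw [show 2 * h - a - m - l - 2 = (2 * h - l - 2 - a) - m by ring, ← cchoose_conv,
          Finset.sum_smul]
        refine Finset.sum_congr rfl fun p hp => ?_
        rw [Finset.HasAntidiagonal.mem_antidiagonal] at hp
        rw [hp]
      · intro N _ hN
        rw [XS _ _ _ (by simp at hN; omega), smul_zero]
    simp only [h2, Finset.smul_sum, smul_smul]
    rw [Finset.sum_comm]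
    refine Finset.sum_congr rfl fun a _ => ?_
    rw [Finset.sum_comm]
    refine Finset.sum_congr rfl fun b _ => ?_
    refine Finset.sum_congr rfl fun t _ => ?_
    refine Finset.sum_congr rfl fun s _ => ?_
    rw [show 2 * h - l - t - 2 - a = 2 * h - l - 2 - a - (t : ℤ) by ring]
    congr 1
    ring
  -- right side
  have hb := fun a b : ℕ => W.bor_ev ((V.L1 ^ a) u) ((V.L1 ^ b) v) w l
    (2 * h - a - m - l - 2) (2 * k - b - n - l - 2)
  choose K1 hK1 using hb
  refine ⟨S + ∑ a ∈ Finset.range J, ∑ b ∈ Finset.range J, K1 a b, fun K hK => ?_⟩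
  rw [left K (by omega)]
  have right : ∀ a ∈ Finset.range J, ∀ b ∈ Finset.range J,
      ∑ N ∈ Finset.range K, cchoose (2 * h - a - m - l - 2) N • X a b N
      = (1 / ((a.factorial : ℂ) * b.factorial)) • ∑ i ∈ Finset.range K,
        ((-1 : ℂ) ^ i * cchoose l i) •
          (W.op ((V.L1 ^ a) u) (l + (2 * h - a - m - l - 2) - (i : ℤ))
            (W.op ((V.L1 ^ b) v) ((2 * k - b - n - l - 2) + (i : ℤ)) w)
            - ((-1 : ℂ) ^ l) • W.op ((V.L1 ^ b) v) (l + (2 * k - b - n - l - 2) - (i : ℤ))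
              (W.op ((V.L1 ^ a) u) ((2 * h - a - m - l - 2) + (i : ℤ)) w)) := by
    intro a ha b hb
    have h1 : K1 a b ≤ ∑ b ∈ Finset.range J, K1 a b :=
      Finset.single_le_sum (f := fun b => K1 a b) (fun _ _ => Nat.zero_le _) hb
    have h2 : ∑ b ∈ Finset.range J, K1 a b ≤ ∑ a ∈ Finset.range J, ∑ b ∈ Finset.range J, K1 a b :=
      Finset.single_le_sum (f := fun a => ∑ b ∈ Finset.range J, K1 a b)
        (fun _ _ => Nat.zero_le _) ha
    rw [← hK1 a b K (by omega), Finset.smul_sum]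
    refine Finset.sum_congr rfl fun N _ => ?_
    simp only [X]
    rw [smul_comm]
    congr 3
    simp only [E]; ring
  rw [Finset.sum_congr rfl fun a ha => Finset.sum_congr rfl fun b hb => right a ha b hb]
  have d1 : ∀ i : ℕ, W.dag (n + (i : ℤ)) v (W.dag (l + m - (i : ℤ)) u w)
      = ∑ a ∈ Finset.range J, ∑ b ∈ Finset.range J,
        ((-1 : ℂ) ^ h * (-1) ^ k * (1 / ((a.factorial : ℂ) * b.factorial))) •
        W.op ((V.L1 ^ b) v) (l + (2 * k - b - n - l - 2) - (i : ℤ))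
              (W.op ((V.L1 ^ a) u) ((2 * h - a - m - l - 2) + (i : ℤ)) w) := by
    intro i
    rw [W.dag_apply h _ u hu w J (by omega), map_sum]
    refine Finset.sum_congr rfl fun a _ => ?_
    rw [map_smul, W.dag_apply k _ v hv _ J (by omega), Finset.smul_sum]
    refine Finset.sum_congr rfl fun b _ => ?_
    rw [smul_smul]
    congr 1
    · ring
    · congr 1
      · ring
      · congr 1; ring
  have d2 : ∀ i : ℕ, W.dag (m + (i : ℤ)) u (W.dag (l + n - (i : ℤ)) v w)
      = ∑ a ∈ Finset.range J, ∑ b ∈ Finset.range J,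
        ((-1 : ℂ) ^ h * (-1) ^ k * (1 / ((a.factorial : ℂ) * b.factorial))) •
          W.op ((V.L1 ^ a) u) (l + (2 * h - a - m - l - 2) - (i : ℤ))
            (W.op ((V.L1 ^ b) v) ((2 * k - b - n - l - 2) + (i : ℤ)) w) := by
    intro i
    rw [W.dag_apply k _ v hv w J (by omega), map_sum, Finset.sum_comm]
    refine Finset.sum_congr rfl fun b _ => ?_
    rw [map_smul, W.dag_apply h _ u hu _ J (by omega), Finset.smul_sum]
    refine Finset.sum_congr rfl fun a _ => ?_
    rw [smul_smul]
    congr 1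
    · ring
    · congr 1
      · ring
      · congr 1; ring
  simp only [d1, d2, Finset.smul_sum, ← Finset.sum_sub_distrib]
  symm
  rw [Finset.sum_comm]
  refine Finset.sum_congr rfl fun a _ => ?_
  rw [Finset.sum_comm]
  refine Finset.sum_congr rfl fun b _ => ?_
  refine Finset.sum_congr rfl fun i _ => ?_
  have hll : (-1 : ℂ) ^ l * (-1 : ℂ) ^ l = 1 := by
    rw [← zpow_add₀ (by norm_num : (-1 : ℂ) ≠ 0)]
    exact Even.neg_one_zpow ⟨l, rfl⟩
  simp only [smul_sub, smul_smul, σ]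
  generalize W.op ((V.L1 ^ a) u) _ _ = x
  generalize W.op ((V.L1 ^ b) v) _ _ = y
  have e : ((-1 : ℂ) ^ l * (-1 : ℂ) ^ l * ((-1 : ℂ) ^ i * cchoose l i * ((-1) ^ h * (-1) ^ k
      * (1 / ((a.factorial : ℂ) * b.factorial))))) • y = ((1 : ℂ) * ((-1 : ℂ) ^ i * cchoose l i
      * ((-1) ^ h * (-1) ^ k * (1 / ((a.factorial : ℂ) * b.factorial))))) • y := by rw [hll]
  refine sub_eq_zero.1 ((?_ : _ = _ - _).trans (sub_eq_zero.2 e.symm))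
  module

theorem VOA.iSup_wt (V : VOA) : (⨆ n, V.wtSpace n) = ⊤ := by
  rw [eq_top_iff]
  intro v _
  rw [← V.proj_sum v]
  apply finsum_induction (· ∈ ⨆ n, V.wtSpace n)
  · exact zero_mem _
  · intro a b; exact add_mem
  · intro n; exact Submodule.mem_iSup_of_mem n (V.proj_mem n v)

theorem VOA.hom_induction (V : VOA) {P : V.carrier → Prop}
    (hom : ∀ n, ∀ v ∈ V.wtSpace n, P v) (zero : P 0)
    (add : ∀ a b, P a → P b → P (a + b)) (v : V.carrier) : P v := by
  have : v ∈ ⨆ n, V.wtSpace n := by rw [V.iSup_wt]; trivial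
  exact Submodule.iSup_induction (motive := P) _ this hom zero add

theorem WeakModule.dag_bor (W : WeakModule V) (u v : V.carrier) (w : W.carrier) (l m n : ℤ) :
    ∃ K0 : ℕ, ∀ K, K0 ≤ K →
    (∑ t ∈ Finset.range K, cchoose m t • W.dag (m + n - (t : ℤ)) (V.op u (l + (t : ℤ)) v) w)
      = ∑ i ∈ Finset.range K, ((-1 : ℂ) ^ i * cchoose l i) •
          (W.dag (n + (i : ℤ)) v (W.dag (l + m - (i : ℤ)) u w)
            - ((-1 : ℂ) ^ l) • W.dag (m + (i : ℤ)) u (W.dag (l + n - (i : ℤ)) v w)) := by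
  simp only [← V.opB_apply]
  induction u using V.hom_induction with
  | hom h u hu =>
    induction v using V.hom_induction with
    | hom k v hv => exact W.dag_bor_hom h k u v hu hv w l m n
    | zero => exact ⟨0, fun K _ => by simp⟩
    | add a b ha hb =>
      obtain ⟨A, hA⟩ := ha
      obtain ⟨B, hB⟩ := hb
      refine ⟨A + B, fun K hK => ?_⟩
      have h1 := hA K (by omega)
      have h2 := hB K (by omega)
      simp only [map_add, LinearMap.add_apply, smul_add, Finset.sum_add_distrib, h1, h2]
      rw [← Finset.sum_add_distrib]
      refine Finset.sum_congr rfl fun i _ => ?_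
      module
  | zero => exact ⟨0, fun K _ => by simp⟩
  | add a b ha hb =>
    obtain ⟨A, hA⟩ := ha
    obtain ⟨B, hB⟩ := hb
    refine ⟨A + B, fun K hK => ?_⟩
    have h1 := hA K (by omega)
    have h2 := hB K (by omega)
    simp only [map_add, LinearMap.add_apply, smul_add, Finset.sum_add_distrib, h1, h2]
    rw [← Finset.sum_add_distrib]
    refine Finset.sum_congr rfl fun i _ => ?_
    module

end
noncomputable section

variable {V : VOA}

/-- `D(W)` as a subspace of the full dual. -/
def WeakModule.dual (W : WeakModule V) : Submodule ℂ (W.carrier →ₗ[ℂ] ℂ) where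
  carrier := {α | ∀ v : V.carrier, ∃ N : ℤ, ∀ n : ℤ, N ≤ n → α ∘ₗ W.dag n v = 0}
  add_mem' := by
    intro a b ha hb v
    obtain ⟨A, hA⟩ := ha v
    obtain ⟨B, hB⟩ := hb v
    refine ⟨max A B, fun n hn => ?_⟩
    rw [LinearMap.add_comp, hA n (by omega), hB n (by omega), add_zero]
  zero_mem' := fun v => ⟨0, fun n _ => by simp⟩
  smul_mem' := by
    intro c a ha v
    obtain ⟨A, hA⟩ := ha v
    exact ⟨A, fun n hn => by rw [LinearMap.smul_comp, hA n hn, smul_zero]⟩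

theorem WeakModule.dual_stable (W : WeakModule V) (u : V.carrier) (m : ℤ)
    (α : W.carrier →ₗ[ℂ] ℂ) (hα : α ∈ W.dual) : α ∘ₗ W.dag m u ∈ W.dual := by
  intro v
  obtain ⟨N1, h1⟩ := hα v
  obtain ⟨T, hT⟩ := V.trunc v u
  have h2 := fun t : ℕ => hα (V.op v (0 + (t : ℤ)) u)
  choose N2 h2 using h2
  refine ⟨max N1 (∑ t ∈ Finset.range T.toNat, (|N2 t| + t) - m), fun q hq => ?_⟩
  ext w
  simp only [LinearMap.comp_apply, LinearMap.zero_apply]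
  obtain ⟨K0, hK⟩ := W.dag_bor v u w 0 q m
  have hb := hK (K0 + 1) (by omega)
  rw [Finset.sum_eq_single_of_mem (s := Finset.range (K0 + 1)) (a := 0)
    (f := fun i : ℕ => ((-1 : ℂ) ^ i * cchoose 0 i) •
          (W.dag (m + (i : ℤ)) u (W.dag (0 + q - (i : ℤ)) v w)
            - ((-1 : ℂ) ^ (0 : ℤ)) • W.dag (q + (i : ℤ)) v (W.dag (0 + m - (i : ℤ)) u w)))
    (by simp) (fun i _ hi => by rw [cchoose_zero_left i hi]; simp)] at hb
  simp only [cchoose_zero_right, pow_zero, zpow_zero, one_smul, mul_one, Nat.cast_zero, add_zero,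
    sub_zero, zero_add] at hb
  have hb' := congrArg α hb
  rw [map_sub, map_sum] at hb'
  have e1 : α (W.dag q v (W.dag m u w)) = 0 :=
    LinearMap.congr_fun (h1 q (by omega)) (W.dag m u w)
  rw [e1, sub_zero] at hb'
  rw [← hb']
  refine Finset.sum_eq_zero fun t _ => ?_
  rw [map_smul]
  by_cases ht : T ≤ t
  · rw [hT _ ht]; simp
  · have h3 : |N2 t| + t ≤ ∑ t ∈ Finset.range T.toNat, (|N2 t| + t) :=
      Finset.single_le_sum (f := fun t : ℕ => |N2 t| + (t : ℤ)) (fun _ _ => by positivity)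
        (by simp; omega)
    have h4 := le_abs_self (N2 t)
    have h5 := h2 t (q + m - t) (by omega)
    rw [zero_add] at h5
    rw [show α (W.dag (q + m - t) (V.op v t u) w) = 0 from LinearMap.congr_fun h5 w, smul_zero]

theorem VOA.L1_one (V : VOA) : V.L1 V.one = 0 := V.create_nonneg _ _ (by norm_num)

theorem VOA.L1_omega (V : VOA) : V.L1 V.omega = 0 := by
  have h := V.virasoro 1 (-2) V.one
  norm_num at h
  rw [V.create, V.create_nonneg _ 2 (by norm_num), V.create_nonneg _ 0 (by norm_num)] at h
  rw [V.L1_apply]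
  rw [← V.opB_apply _ _ 0] at h
  simpa using h

theorem WeakModule.dag_primary (W : WeakModule V) (h n : ℤ) (u : V.carrier)
    (hu : u ∈ V.wtSpace h) (h0 : V.L1 u = 0) (w : W.carrier) :
    W.dag n u w = (-1 : ℂ) ^ h • W.op u (2 * h - n - 2) w := by
  rw [W.dag_apply h n u hu w (V.KK h + 1) (by omega),
    Finset.sum_eq_single_of_mem 0 (by simp)]
  · simp
  · intro i _ hi
    obtain ⟨j, rfl⟩ := Nat.exists_eq_succ_of_ne_zero hi
    rw [Nat.succ_eq_add_one, pow_succ, Module.End.mul_apply, h0, map_zero, ← W.opB_apply]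
    simp

def WeakModule.D (W : WeakModule V) : WeakModule V where
  carrier := W.dual
  op u n α := ⟨α.1 ∘ₗ W.dag n u, W.dual_stable u n α.1 α.2⟩
  op_linear_left n α :=
    ⟨fun a b => by ext w; simp, fun c a => by ext w; simp⟩
  op_linear_right u n :=
    ⟨fun a b => by ext w; simp, fun c a => by ext w; simp⟩
  trunc u α := by
    obtain ⟨N, hN⟩ := α.2 u
    exact ⟨N, fun n hn => Subtype.ext (hN n hn)⟩
  one_op n α := by
    apply Subtype.ext
    ext w
    simp only [LinearMap.comp_apply]
    rw [W.dag_primary 0 n V.one V.one_wt V.L1_one, W.one_op]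
    by_cases h : n = -1
    · subst h; simp
    · rw [if_neg (by omega), if_neg h]; simp
  borcherds u v α l m n := by
    obtain ⟨N1, h1⟩ := V.trunc u v
    obtain ⟨N2, h2⟩ := α.2 v
    obtain ⟨N3, h3⟩ := α.2 u
    apply Subtype.ext
    ext w
    obtain ⟨K0, hK⟩ := W.dag_bor u v w l m n
    have hb := congrArg α.1 (hK (K0 + (N1 - l).toNat + (N2 - n).toNat + (N3 - m).toNat)
      (by omega))
    rw [finsum_eq_range _ (K0 + (N1 - l).toNat + (N2 - n).toNat + (N3 - m).toNat),
      finsum_eq_range _ (K0 + (N1 - l).toNat + (N2 - n).toNat + (N3 - m).toNat)]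
    · simp only [AddSubmonoidClass.coe_finsetSum, LinearMap.sum_apply, Submodule.coe_smul,
        Submodule.coe_sub, LinearMap.smul_apply, LinearMap.sub_apply, LinearMap.comp_apply]
      simpa only [map_sum, map_smul, map_sub] using hb
    · intro i hi
      apply Subtype.ext
      ext x
      have e2 := h2 (n + i) (by omega)
      have e3 := h3 (m + i) (by omega)
      simp only [Submodule.coe_smul, Submodule.coe_sub, e2, e3]
      simp
    · intro i hi
      apply Subtype.ext
      ext x
      simp [h1 (l + i) (by omega)]

theorem classA_support (hV : V.classA) (W : GenModule V)
    (α : W.carrier →ₗ[ℂ] ℂ) (hα : α ∈ W.toWeakModule.dual) :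
    {h : ℂ | ∃ w ∈ W.wt h, α w ≠ 0}.Finite := by
  have ht := hV W.toWeakModule.D
  have hm : (⟨α, hα⟩ : W.toWeakModule.D.carrier) ∈ ⨆ h, W.toWeakModule.D.eig h := by
    rw [ht]; trivial
  have key : ∀ β : W.toWeakModule.D.carrier, β ∈ (⨆ h, W.toWeakModule.D.eig h) →
      {h : ℂ | ∃ w ∈ W.wt h, (show W.toWeakModule.dual from β).1 w ≠ 0}.Finite := by
    intro β hβ
    refine Submodule.iSup_induction (motive := fun β : W.toWeakModule.D.carrier =>
      {h : ℂ | ∃ w ∈ W.wt h, (show W.toWeakModule.dual from β).1 w ≠ 0}.Finite) _ hβ ?_ ?_ ?_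
    · intro h β hβ
      apply (Set.finite_singleton h).subset
      rintro g ⟨w, hw, hne⟩
      simp only [WeakModule.eig, LinearMap.mem_ker, LinearMap.sub_apply, LinearMap.smul_apply,
        LinearMap.id_apply, sub_eq_zero] at hβ
      have e : (show W.toWeakModule.dual from β).1 (W.toWeakModule.dag 1 V.omega w)
          = h * (show W.toWeakModule.dual from β).1 w :=
        LinearMap.congr_fun (congrArg Subtype.val
          (show (show W.toWeakModule.dual from W.toWeakModule.D.L0 β)
            = (show W.toWeakModule.dual from h • β) from hβ)) w
      rw [W.toWeakModule.dag_primary 2 1 V.omega V.omega_wt V.L1_omega] at e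
      norm_num at e
      rw [W.wt_L0 g w hw, map_smul, smul_eq_mul] at e
      exact mul_right_cancel₀ hne e
    · apply Set.finite_empty.subset
      rintro g ⟨w, hw, hne⟩
      exact hne rfl
    · intro a b ha hb
      apply (ha.union hb).subset
      rintro g ⟨w, hw, hne⟩
      by_cases h : (show W.toWeakModule.dual from a).1 w = 0
      · right
        refine ⟨w, hw, fun h2 => hne ?_⟩
        change (show W.toWeakModule.dual from a).1 w + (show W.toWeakModule.dual from b).1 w = 0
        rw [h, h2, add_zero]
      · left
        exact ⟨w, hw, h⟩
  exact key _ hm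

theorem WeakModule.mem_dual_of (W : WeakModule V) (α : W.carrier →ₗ[ℂ] ℂ)
    (C : Submodule ℂ W.carrier) (hα : ∀ x ∈ C, α x = 0)
    (hC : ∀ k : ℤ, ∀ v ∈ V.wtSpace k, ∃ P : ℤ, ∀ p : ℤ, p ≤ P → ∀ w, W.op v p w ∈ C) :
    α ∈ W.dual := by
  intro v
  induction v using V.hom_induction with
  | hom h v hv =>
    have h1 := fun i : ℕ => hC _ _ (V.L1pow_mem h v hv i)
    choose P hP using h1
    refine ⟨2 * h + ∑ i ∈ Finset.range (V.KK h), |P i|, fun n hn => ?_⟩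
    ext w
    rw [LinearMap.comp_apply, W.dag_apply h n v hv w _ le_rfl, map_sum]
    refine Finset.sum_eq_zero fun i hi => ?_
    have h3 : |P i| ≤ ∑ i ∈ Finset.range (V.KK h), |P i| :=
      Finset.single_le_sum (f := fun i => |P i|) (fun _ _ => by positivity) hi
    have h4 := neg_abs_le (P i)
    rw [map_smul, hα _ (hP i _ (by omega) w), smul_zero]
  | zero => exact ⟨0, fun n _ => by simp⟩
  | add a b ha hb =>
    obtain ⟨A, hA⟩ := ha
    obtain ⟨B, hB⟩ := hb
    refine ⟨max A B, fun n hn => ?_⟩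
    rw [map_add, LinearMap.comp_add, hA n (by omega), hB n (by omega), add_zero]

def GenModule.projL (W : GenModule V) (h : ℂ) : W.carrier →ₗ[ℂ] W.carrier :=
  IsLinearMap.mk' _ (W.projW_linear h)

theorem GenModule.projL_apply (W : GenModule V) (h : ℂ) (w : W.carrier) :
    W.projL h w = W.projW h w := rfl

theorem GenModule.iSup_wt (W : GenModule V) : (⨆ h, W.wt h) = ⊤ := by
  rw [eq_top_iff]
  intro v _
  rw [← W.projW_sum v]
  apply finsum_induction (· ∈ ⨆ n, W.wt n)
  · exact zero_mem _
  · intro a b; exact add_mem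
  · intro n; exact Submodule.mem_iSup_of_mem n (W.projW_mem n v)

theorem GenModule.hom_induction (W : GenModule V) {P : W.carrier → Prop}
    (hom : ∀ n, ∀ v ∈ W.wt n, P v) (zero : P 0)
    (add : ∀ a b, P a → P b → P (a + b)) (v : W.carrier) : P v := by
  have : v ∈ ⨆ n, W.wt n := by rw [W.iSup_wt]; trivial
  exact Submodule.iSup_induction (motive := P) _ this hom zero add

theorem GenModule.proj_hom_mem (W : GenModule V) (C : Submodule ℂ W.carrier) (g h : ℂ)
    (x : W.carrier) (hx : x ∈ W.wt g) (hxC : x ∈ C) : W.projL h x ∈ C := by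
  rw [W.projL_apply]
  by_cases e : g = h
  · subst e; rwa [W.projW_eq _ x hx]
  · rw [W.projW_ne g h e x hx]; exact zero_mem _

theorem finite_quotient (hV : V.classA) (W : OrdModule V) (C : Submodule ℂ W.carrier)
    (hgr : ∀ h : ℂ, ∀ x ∈ C, W.toGenModule.projL h x ∈ C)
    (hC : ∀ k : ℤ, ∀ v ∈ V.wtSpace k, ∃ P : ℤ, ∀ p : ℤ, p ≤ P → ∀ w, W.op v p w ∈ C) :
    FiniteDimensional ℂ (W.carrier ⧸ C) := by
  let S : Set ℂ := {h | ¬ W.wt h ≤ C}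
  have hS : S.Finite := by
    have h1 : ∀ h : ℂ, ∃ f : W.carrier →ₗ[ℂ] ℂ, (∀ x ∈ C, f x = 0) ∧
        (h ∈ S → ∃ w ∈ W.wt h, f w ≠ 0) := by
      intro h
      by_cases hh : h ∈ S
      · obtain ⟨w, hw, hwC⟩ := SetLike.not_le_iff_exists.1 hh
        obtain ⟨f, hf, hfC⟩ := Submodule.exists_le_ker_of_notMem hwC
        exact ⟨f, fun x hx => hfC hx, fun _ => ⟨w, hw, hf⟩⟩
      · exact ⟨0, fun _ _ => rfl, fun h2 => absurd h2 hh⟩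
    choose f hf1 hf2 using h1
    have fin : ∀ x : W.carrier,
        (Function.support fun h => f h (W.toGenModule.projL h x)).Finite := by
      intro x
      refine (W.projW_finite x).subset fun h hh h0 => hh ?_
      have : W.toGenModule.projL h x = 0 := h0
      simp only [this, map_zero]
    let α : W.carrier →ₗ[ℂ] ℂ :=
      { toFun := fun x => ∑ᶠ h, f h (W.toGenModule.projL h x)
        map_add' := fun a b => by
          simp only [map_add]
          exact finsum_add_distrib (fin a) (fin b)
        map_smul' := fun c a => by
          simp only [map_smul]
          rw [smul_finsum]; rfl }
    have hα : ∀ x ∈ C, α x = 0 := by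
      intro x hx
      change ∑ᶠ h, f h (W.toGenModule.projL h x) = 0
      rw [finsum_congr (g := fun _ => 0) fun h => hf1 h _ (hgr h x hx), finsum_zero]
    refine (classA_support hV W.toGenModule α
      (W.toWeakModule.mem_dual_of α C hα hC)).subset fun h hh => ?_
    obtain ⟨w, hw, hne⟩ := hf2 h hh
    refine ⟨w, hw, ?_⟩
    change ∑ᶠ g, f g (W.toGenModule.projL g w) ≠ 0
    rw [finsum_eq_single _ h, W.toGenModule.projL_apply, W.projW_eq h w hw]
    · exact hne
    · intro g hg
      rw [W.toGenModule.projL_apply, W.projW_ne h g hg.symm w hw, map_zero]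
  have hT : (⊤ : Submodule ℂ (W.carrier ⧸ C)) ≤ ⨆ h : hS.toFinset, (W.wt h).map C.mkQ := by
    intro y _
    obtain ⟨x, rfl⟩ := C.mkQ_surjective y
    induction x using W.toGenModule.hom_induction with
    | hom h x hx =>
      by_cases hh : h ∈ S
      · exact Submodule.mem_iSup_of_mem (⟨h, by simpa using hh⟩ : hS.toFinset)
          (Submodule.mem_map_of_mem hx)
      · have : x ∈ C := (not_not.1 hh) hx
        rw [show C.mkQ x = 0 by simpa using this]
        exact zero_mem _
    | zero => rw [map_zero]; exact zero_mem _
    | add a b ha hb => rw [map_add]; exact add_mem (ha trivial) (hb trivial)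
  have : ∀ h : hS.toFinset, FiniteDimensional ℂ ↥((W.wt h).map C.mkQ) := by
    intro h
    have := W.wt_fd h
    infer_instance
  have h2 : FiniteDimensional ℂ ↥(⨆ h : hS.toFinset, (W.wt h).map C.mkQ) :=
    Submodule.finite_iSup _
  rw [top_le_iff.1 hT] at h2
  exact Module.finite_def.2 (Module.Finite.iff_fg.1 h2)

end

theorem OrdModule.Cn_op_mem {V : VOA} (W : WeakModule V) (n : ℤ) (hn : 2 ≤ n) (v : V.carrier)
    (p : ℤ) (hp : p ≤ -n) (w : W.carrier) : W.op v p w ∈ W.Cn n := by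
  have h := W.op_one_neg v (p + n - 1) (by omega) (n - 1).toNat w
  have h1 : (((n - 1).toNat : ℕ) : ℤ) = n - 1 := Int.toNat_of_nonneg (by omega)
  rw [h1, show -1 - (n - 1) = -n by ring, show p + n - 1 - (n - 1) = p by ring] at h
  have hc : (-1 : ℂ) ^ (n - 1).toNat * cchoose (p + n - 1) (n - 1).toNat ≠ 0 :=
    mul_ne_zero (pow_ne_zero _ (by norm_num)) (cchoose_neg_ne_zero _ (by omega) _)
  have h2 : W.op (V.op v (p + n - 1) V.one) (-n) w ∈ W.Cn n := Submodule.subset_span ⟨_, _, rfl⟩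
  rw [h] at h2
  exact ((W.Cn n).smul_mem_iff hc).1 h2

theorem OrdModule.Cn_graded {V : VOA} (W : GenModule V) (n : ℤ) (h : ℂ) (x : W.carrier)
    (hx : x ∈ W.toWeakModule.Cn n) : W.projL h x ∈ W.toWeakModule.Cn n := by
  induction hx using Submodule.span_induction with
  | zero => rw [map_zero]; exact zero_mem _
  | add x y _ _ hx hy => rw [map_add]; exact add_mem hx hy
  | smul a x _ hx => rw [map_smul]; exact Submodule.smul_mem _ _ hx
  | mem x hx =>
    obtain ⟨v, w, rfl⟩ := hx
    rw [← W.opB_apply]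
    induction v using V.hom_induction with
    | zero => rw [map_zero, LinearMap.zero_apply, map_zero]; exact zero_mem _
    | add a b ha hb => rw [map_add, LinearMap.add_apply, map_add]; exact add_mem ha hb
    | hom k v hv =>
      induction w using W.hom_induction with
      | zero => rw [map_zero, map_zero]; exact zero_mem _
      | add a b ha hb => rw [map_add, map_add]; exact add_mem ha hb
      | hom g w hw =>
        exact W.proj_hom_mem _ _ h _ (W.wt_op k v hv g _ w hw) (Submodule.subset_span ⟨_, _, rfl⟩)

theorem OrdModule.C1_graded {V : VOA} (W : GenModule V) (h : ℂ) (x : W.carrier)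
    (hx : x ∈ W.C1W) : W.projL h x ∈ W.C1W := by
  induction hx using Submodule.span_induction with
  | zero => rw [map_zero]; exact zero_mem _
  | add x y _ _ hx hy => rw [map_add]; exact add_mem hx hy
  | smul a x _ hx => rw [map_smul]; exact Submodule.smul_mem _ _ hx
  | mem x hx =>
    rcases hx with ⟨v, hv, w, hw, rfl⟩ | ⟨w, rfl⟩
    · have key : V.pos ≤ ⨅ w : W.posW, (W.C1W.comap (W.projL h)).comap
          ((W.opB (-1)).flip (w : W.carrier)) := by
        refine iSup₂_le fun k hk v hv => ?_
        rw [Submodule.mem_iInf]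
        rintro ⟨w, hw⟩
        have : W.posW ≤ (W.C1W.comap (W.projL h)).comap (W.opB (-1) v) := by
          refine iSup₂_le fun g hg w hw => ?_
          refine W.proj_hom_mem _ _ h _ (W.wt_op k v hv g _ w hw) (Submodule.subset_span ?_)
          exact Or.inl ⟨v, Submodule.mem_iSup_of_mem k (Submodule.mem_iSup_of_mem hk hv), w,
            Submodule.mem_iSup_of_mem g (Submodule.mem_iSup_of_mem hg hw), rfl⟩
        exact this hw
      exact (Submodule.mem_iInf _).1 (key hv) ⟨w, hw⟩
    · rw [← W.opB_apply]
      induction w using W.hom_induction with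
      | zero => rw [map_zero, map_zero]; exact zero_mem _
      | add a b ha hb => rw [map_add, map_add]; exact add_mem ha hb
      | hom g w hw =>
        exact W.proj_hom_mem _ _ h _ (W.wt_op 2 _ V.omega_wt g _ w hw)
          (Submodule.subset_span (Or.inr ⟨_, rfl⟩))

theorem WeakModule.omega_comm {V : VOA} (W : WeakModule V) (v : V.carrier) (n : ℤ)
    (w : W.carrier) : W.op (V.op V.omega 0 v) n w
      = W.op V.omega 0 (W.op v n w) - W.op v n (W.op V.omega 0 w) := by
  rw [← W.comm V.omega v w 0 n, finsum_eq_single _ 0]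
  · simp [cchoose]
  · intro i hi
    have : cchoose 0 i = 0 := by
      unfold cchoose
      rw [Finset.prod_eq_zero (Finset.mem_range.2 (Nat.pos_of_ne_zero hi)) (by simp), zero_div]
    rw [this, zero_smul]

theorem OrdModule.C1_op_mem {V : VOA} (W : GenModule V) (k : ℤ) (v : V.carrier)
    (hv : v ∈ V.wtSpace k) (a : ℤ) (ha : 0 ≤ a) (hka : 1 ≤ k + a) (j : ℕ) : ∀ p : ℤ, p ≤ -1 - a →
    ∀ h : ℂ, 0 < h.re + j → ∀ w ∈ W.wt h, W.op v (p - j) w ∈ W.C1W := by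
  induction j with
  | zero =>
    intro p hp h hh w hw
    have e := W.op_one_neg v p (by omega) 0 w
    simp only [Nat.cast_zero, sub_zero, pow_zero, one_mul] at e ⊢
    rw [show cchoose p 0 = 1 by simp [cchoose], one_smul] at e
    rw [← e]
    refine Submodule.subset_span (Or.inl ⟨_, ?_, w, ?_, rfl⟩)
    · exact Submodule.mem_iSup_of_mem _ (Submodule.mem_iSup_of_mem (by omega)
        (V.op_wt k 0 p v hv _ V.one_wt))
    · exact Submodule.mem_iSup_of_mem h (Submodule.mem_iSup_of_mem (by simpa using hh) hw)
  | succ j ih =>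
    intro p hp h hh w hw
    have h1 := ih p hp _ (by simp; push_cast at hh; linarith) _ (W.wt_op 2 _ V.omega_wt h 0 w hw)
    have h2 := W.omega_comm v (p - j) w
    have h3 : W.op (V.op V.omega 0 v) (p - j) w ∈ W.C1W := by
      rw [h2]
      exact sub_mem (Submodule.subset_span (Or.inr ⟨_, rfl⟩)) h1
    have e := W.op_one_neg v (-2) (by omega) (-1 - p + j).toNat w
    have hN : (((-1 - p + j).toNat : ℕ) : ℤ) = -1 - p + j := Int.toNat_of_nonneg (by omega)
    rw [hN, show -1 - (-1 - p + (j : ℤ)) = p - j by ring,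
      show -2 - (-1 - p + (j : ℤ)) = p - ((j + 1 : ℕ) : ℤ) by push_cast; ring,
      ← V.omega_zero] at e
    rw [e] at h3
    exact (Submodule.smul_mem_iff _ (mul_ne_zero (pow_ne_zero _ (by norm_num))
      (cchoose_neg_ne_zero _ (by omega) _))).1 h3

/-- Let `V` be of class 𝒜 (`L(0)` acts semisimply on every weak
`V`-module) and `W` an ordinary `V`-module.  Then `W/Cₙ(W)` is finite-dimensional for
every `n ≥ 2`, and `W/C₁(W)` is finite-dimensional provided the real parts of the
weights of `W` are bounded from below. -/
theorem quotients_finite_dimensional_of_classA (V : VOA) (hV : V.classA)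
    (W : OrdModule V) :
    (∀ n : ℤ, 2 ≤ n →
      FiniteDimensional ℂ (W.carrier ⧸ W.toGenModule.toWeakModule.Cn n)) ∧
    ((∃ B : ℝ, ∀ h : ℂ, W.wt h ≠ ⊥ → B ≤ h.re) →
      FiniteDimensional ℂ (W.carrier ⧸ W.toGenModule.C1W)) := by
  refine ⟨fun n hn => ?_, fun ⟨B, hB⟩ => ?_⟩
  · exact finite_quotient hV W _ (fun h x hx => OrdModule.Cn_graded W.toGenModule n h x hx)
      fun k v hv => ⟨-n, fun p hp w => OrdModule.Cn_op_mem W.toWeakModule n hn v p hp w⟩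
  · refine finite_quotient hV W _ (fun h x hx => OrdModule.C1_graded W.toGenModule h x hx)
      fun k v hv => ?_
    obtain ⟨j, hj⟩ := exists_nat_gt (-B)
    refine ⟨-1 - (|k| + 1) - j, fun p hp w => ?_⟩
    have hk := neg_abs_le k
    have hk' := abs_nonneg k
    rw [← W.opB_apply]
    induction w using W.toGenModule.hom_induction with
    | zero => rw [map_zero]; exact zero_mem _
    | add a b ha hb => rw [map_add]; exact add_mem ha hb
    | hom h w hw =>
      by_cases hw0 : W.wt h = ⊥
      · rw [hw0, Submodule.mem_bot] at hw
        rw [hw, map_zero]; exact zero_mem _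
      · have := hB h hw0
        have := OrdModule.C1_op_mem W.toGenModule k v hv (|k| + 1) (by omega) (by omega) j (p + j)
          (by omega) h (by linarith) w hw
        rwa [show p + (j : ℤ) - j = p by ring] at this
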